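/- Let d ≥ 1 be an integer, δ ∈ (0,1], p ∈ (d/2,∞), R ∈ (0,∞). Let Ĥ(m,x) (m a symmetric d×d matrix, x ∈ B_R) be δ-elliptic, measurable in x for each fixed m, with Ĥ(0,·) ∈ L_p on compact subsets of B_R, and let f be in L_p on compact subsets of B_R. Let u be twice continuously differentiable on B_R. Suppose there exists a constant N such that for every ball B_r(x₀) with closure contained in B_R and every φ twice continuously differentiable on B̄_r(x₀), the inequality u(x) ≥ φ(x) − sup_{∂B_r(x₀)} (u − φ)₋ − N r² (⨍_{B_r(x₀)} ((f(y) − Ĥ(D²φ(y),y))₊)^p dy)^{1/p} holds for all x ∈ B_r(x₀). Then Ĥ(D²u(x),x) ≤ f(x) for almost every x ∈ B_R. -/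

import Mathlib

open MeasureTheory Metric Set Filter
open scoped ENNReal RealInnerProductSpace

noncomputable section

/-- Euclidean space `ℝ^d`. -/
abbrev E (d : ℕ) : Type := EuclideanSpace ℝ (Fin d)

/-- Frobenius norm of a `d × d` matrix. -/
def frob {d : ℕ} (m : Matrix (Fin d) (Fin d) ℝ) : ℝ :=
  Real.sqrt (∑ i, ∑ j, (m i j) ^ 2)

/-- `F` is `δ`-elliptic: `δ tr w ≤ F (m + w) - F m ≤ δ⁻¹ tr w` for symmetric `m` and
symmetric positive semidefinite `w`. -/
def Elliptic {d : ℕ} (δ : ℝ) (F : Matrix (Fin d) (Fin d) ℝ → ℝ) : Prop :=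
  ∀ m : Matrix (Fin d) (Fin d) ℝ, m.IsSymm →
    ∀ w : Matrix (Fin d) (Fin d) ℝ, w.PosSemidef →
      δ * w.trace ≤ F (m + w) - F m ∧ F (m + w) - F m ≤ δ⁻¹ * w.trace

/-- Gradient of `u : ℝ^d → ℝ` as a vector in `ℝ^d`. -/
def grad {d : ℕ} (u : E d → ℝ) (x : E d) : E d :=
  (EuclideanSpace.equiv (Fin d) ℝ).symm fun i => fderiv ℝ u x (EuclideanSpace.single i 1)

/-- Hessian matrix of `u : ℝ^d → ℝ`. -/
def hess {d : ℕ} (u : E d → ℝ) (x : E d) : Matrix (Fin d) (Fin d) ℝ :=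
  Matrix.of fun i j =>
    fderiv ℝ (fun y => fderiv ℝ u y (EuclideanSpace.single j 1)) x (EuclideanSpace.single i 1)

/-- Normalized `L_p` norm `(⨍_B |g|^p)^{1/p}` (average over `B`). -/
def nLp {d : ℕ} (p : ℝ) (B : Set (E d)) (g : E d → ℝ) : ℝ≥0∞ :=
  ((volume B)⁻¹ * ∫⁻ y in B, ENNReal.ofReal (|g y| ^ p)) ^ (1 / p)

/-- Unnormalized `L_p` norm `(∫_A |g|^p)^{1/p}`. -/
def Lpn {d : ℕ} (p : ℝ) (A : Set (E d)) (g : E d → ℝ) : ℝ≥0∞ :=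
  (∫⁻ y in A, ENNReal.ofReal (|g y| ^ p)) ^ (1 / p)

/-- Morrey norm `‖g‖_{E_{p,μ}(Ω)} = sup_{ρ>0, x∈Ω} ρ^μ (⨍_{B_ρ(x)} |g 1_Ω|^p)^{1/p}`. -/
def morrey {d : ℕ} (p μ : ℝ) (Ω : Set (E d)) (g : E d → ℝ) : ℝ≥0∞ :=
  ⨆ (ρ : ℝ) (_ : 0 < ρ) (x : E d) (_ : x ∈ Ω),
    ENNReal.ofReal (ρ ^ μ) * nLp p (ball x ρ) (Ω.indicator g)

/-- The `(θ, R₀)`-oscillation condition on `F(m, x)`. -/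
def OscCond {d : ℕ} (δ θ R₀ : ℝ) (F : Matrix (Fin d) (Fin d) ℝ → E d → ℝ) : Prop :=
  ∀ r ∈ Set.Ioc (0 : ℝ) R₀, ∀ z : E d,
    ∃ Fb : Matrix (Fin d) (Fin d) ℝ → ℝ,
      ConvexOn ℝ Set.univ Fb ∧ Elliptic δ Fb ∧ Fb 0 = 0 ∧
      ∀ m : Matrix (Fin d) (Fin d) ℝ, m.IsSymm → frob m = 1 →
        (volume (ball z r))⁻¹ *
            ∫⁻ x in ball z r,
              ⨆ (τ : ℝ) (_ : 0 < τ), ENNReal.ofReal (τ⁻¹ * |F (τ • m) x - Fb (τ • m)|)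
          ≤ ENNReal.ofReal θ

/-- The homogeneity bound `|F(ζ m, x)| ≤ ζ |F(m, x)| + K(x)` for `ζ ∈ [0,1]`. -/
def HomBound {d : ℕ} (F : Matrix (Fin d) (Fin d) ℝ → E d → ℝ) (K : E d → ℝ) : Prop :=
  ∀ ζ ∈ Set.Icc (0 : ℝ) 1, ∀ m : Matrix (Fin d) (Fin d) ℝ, m.IsSymm → ∀ x : E d,
    |F (ζ • m) x| ≤ ζ * |F m x| + K x

/-!
Test the comparison estimate at the center of `B_r(x)` with `φ = u + ε (r² - |· - x|²)`. Since
`φ = u` on the sphere, `φ(x) - u(x) = ε r²` and `D²φ = D²u - 2ε I`, dividing by `r²` leaves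
`ε ≤ N (⨍_{B_r(x)} ((f - H(D²u - 2ε I, ·))₊)^p)^{1/p}`. By Lebesgue differentiation, letting `r → 0`
gives `ε ≤ N (f - H(D²u - 2ε I, ·))₊(x)` for almost every `x`, which forces
`H(D²u(x) - 2ε I, x) < f(x)`. Now let `ε → 0` along a sequence; ellipticity makes `H` Lipschitz on
symmetric matrices, with respect to the operator norm.
-/

section Ellipticity

open scoped Matrix.Norms.L2Operator

theorem posSemidef_norm_smul_one_sub {n : Type*} [Fintype n] [DecidableEq n] {A : Matrix n n ℝ}
    (hA : A.IsSymm) : (‖A‖ • (1 : Matrix n n ℝ) - A).PosSemidef := by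
  have hA' : A.IsHermitian := A.conjTranspose_eq_transpose_of_trivial.trans hA
  refine .of_dotProduct_mulVec_nonneg
    ((Matrix.isHermitian_one.smul (IsSelfAdjoint.all _)).sub hA') fun v => ?_
  set x : EuclideanSpace ℝ n := WithLp.toLp 2 v
  have hquad : star v ⬝ᵥ ((‖A‖ • (1 : Matrix n n ℝ) - A).mulVec v)
      = ‖A‖ * ‖x‖ ^ 2 - ⟪x, Matrix.toEuclideanCLM (𝕜 := ℝ) A x⟫ := by
    rw [Matrix.inner_toEuclideanCLM, star_trivial, Matrix.sub_mulVec, Matrix.smul_mulVec,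
      Matrix.one_mulVec, dotProduct_sub, dotProduct_smul, smul_eq_mul,
      EuclideanSpace.real_norm_sq_eq]
    simp only [dotProduct, x, sq]
  rw [hquad, sub_nonneg]
  calc ⟪x, Matrix.toEuclideanCLM (𝕜 := ℝ) A x⟫
      ≤ ‖x‖ * ‖Matrix.toEuclideanCLM (𝕜 := ℝ) A x‖ := real_inner_le_norm _ _
    _ ≤ ‖x‖ * (‖A‖ * ‖x‖) := by gcongr; exact ContinuousLinearMap.le_opNorm _ x
    _ = ‖A‖ * ‖x‖ ^ 2 := by ring

variable {d : ℕ} {δ : ℝ}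

theorem Elliptic.sub_le {F : Matrix (Fin d) (Fin d) ℝ → ℝ} (hF : Elliptic δ F) (hδ : 0 < δ)
    {m m' : Matrix (Fin d) (Fin d) ℝ} (hm : m.IsSymm) (hm' : m'.IsSymm) :
    F m' - F m ≤ 2 * d / δ * ‖m' - m‖ := by
  set c := ‖m' - m‖ with hc_def
  have hc : (c • (1 : Matrix (Fin d) (Fin d) ℝ)).PosSemidef :=
    Matrix.PosSemidef.one.smul (norm_nonneg _)
  -- both `m` and `m'` lie below `m' + c • 1`, which compares `F m` with `F m'`
  have hupper : (c • 1 - (m - m')).PosSemidef :=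
    by
    rw [hc_def, norm_sub_rev]
    exact posSemidef_norm_smul_one_sub (hm.sub hm')
  have hF_ge := (hF m' hm' _ hc).1
  have hF_le := (hF m hm _ hupper).2
  rw [show m + (c • 1 - (m - m')) = m' + c • 1 by abel] at hF_le
  have htrace : (c • 1 - (m - m')).trace ≤ 2 * d * c := by
    have := (posSemidef_norm_smul_one_sub (hm'.sub hm)).trace_nonneg
    simp only [Matrix.trace_sub, Matrix.trace_smul, Matrix.trace_one, Fintype.card_fin,
      smul_eq_mul] at this ⊢
    linarith
  calc F m' - F m ≤ δ⁻¹ * (c • 1 - (m - m')).trace := by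
        linarith [mul_nonneg hδ.le hc.trace_nonneg]
    _ ≤ δ⁻¹ * (2 * d * c) := by gcongr
    _ = 2 * d / δ * c := by ring

theorem Elliptic.abs_sub_le {F : Matrix (Fin d) (Fin d) ℝ → ℝ} (hF : Elliptic δ F) (hδ : 0 < δ)
    {m m' : Matrix (Fin d) (Fin d) ℝ} (hm : m.IsSymm) (hm' : m'.IsSymm) :
    |F m' - F m| ≤ 2 * d / δ * ‖m' - m‖ :=
  abs_sub_le_iff.2 ⟨hF.sub_le hδ hm hm', norm_sub_rev m m' ▸ hF.sub_le hδ hm' hm⟩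

theorem Elliptic.continuousOn {F : Matrix (Fin d) (Fin d) ℝ → ℝ} (hF : Elliptic δ F)
    (hδ : 0 < δ) : ContinuousOn F {m | m.IsSymm} :=
  (LipschitzOnWith.of_dist_le_mul (K := ⟨2 * d / δ, by positivity⟩) fun m' hm' m hm => by
    rw [dist_eq_norm, dist_eq_norm]
    exact hF.abs_sub_le hδ hm hm').continuousOn

variable {X : Type*} [MeasurableSpace X] {μ : Measure X} {H : Matrix (Fin d) (Fin d) ℝ → X → ℝ}
  {M : X → Matrix (Fin d) (Fin d) ℝ}

theorem Elliptic.aestronglyMeasurable_comp (hH : ∀ x, Elliptic δ fun m => H m x) (hδ : 0 < δ)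
    (hHm : ∀ m, Measurable (H m)) (hM : AEStronglyMeasurable M μ)
    (hsymm : ∀ᵐ x ∂μ, (M x).IsSymm) : AEStronglyMeasurable (fun x => H (M x) x) μ := by
  let _ : MeasurableSpace (Matrix (Fin d) (Fin d) ℝ) := borel _
  have _ : BorelSpace (Matrix (Fin d) (Fin d) ℝ) := ⟨rfl⟩
  -- `H` is continuous in `m` on symmetric matrices only, so symmetrize its argument first
  let sym (m : Matrix (Fin d) (Fin d) ℝ) : Matrix (Fin d) (Fin d) ℝ := (2⁻¹ : ℝ) • (m + m.transpose)
  have hsym_isSymm (m) : (sym m).IsSymm := (Matrix.isSymm_add_transpose_self m).smul _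
  have hsym_cont : Continuous sym := by fun_prop
  have hmeas : Measurable (Function.uncurry fun m x => H (sym m) x) :=
    measurable_uncurry_of_continuous_of_measurable
      (fun x => ((hH x).continuousOn hδ).comp_continuous hsym_cont hsym_isSymm) fun m => hHm _
  refine ((hmeas.comp_aemeasurable (hM.aemeasurable.prodMk aemeasurable_id)).congr ?_)
    |>.aestronglyMeasurable
  filter_upwards [hsymm] with x hx
  have hfix : sym (M x) = M x := by
    simp only [sym, hx.eq, ← two_smul ℝ (M x), inv_smul_smul₀ (two_ne_zero' ℝ)]
  simp only [Function.comp_apply, Function.uncurry_apply_pair, hfix, id]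

theorem Elliptic.memLp_comp [IsFiniteMeasure μ] (hH : ∀ x, Elliptic δ fun m => H m x)
    (hδ : 0 < δ) (hHm : ∀ m, Measurable (H m)) {q : ℝ≥0∞} (hH0 : MemLp (H 0) q μ)
    (hM : AEStronglyMeasurable M μ) (hsymm : ∀ᵐ x ∂μ, (M x).IsSymm) {C : ℝ}
    (hC : ∀ᵐ x ∂μ, ‖M x‖ ≤ C) : MemLp (fun x => H (M x) x) q μ := by
  have hdiff : MemLp (fun x => H (M x) x - H 0 x) q μ := by
    refine .of_bound ((aestronglyMeasurable_comp hH hδ hHm hM hsymm).sub hH0.1)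
      (2 * d / δ * C) ?_
    filter_upwards [hsymm, hC] with x hxs hxC
    calc ‖H (M x) x - H 0 x‖ ≤ 2 * d / δ * ‖M x - 0‖ :=
          (hH x).abs_sub_le hδ Matrix.isSymm_zero hxs
      _ ≤ 2 * d / δ * C := by rw [sub_zero]; gcongr
  simpa only [Pi.add_def, sub_add_cancel] using hdiff.add hH0

theorem Elliptic.memLp_comp_of_continuousOn [TopologicalSpace X] [OpensMeasurableSpace X]
    [T2Space X] [IsFiniteMeasureOnCompacts μ] (hH : ∀ x, Elliptic δ fun m => H m x) (hδ : 0 < δ)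
    (hHm : ∀ m, Measurable (H m)) {K : Set X} (hK : IsCompact K) {q : ℝ≥0∞}
    (hH0 : MemLp (H 0) q (μ.restrict K)) (hM : ContinuousOn M K)
    (hsymm : ∀ x ∈ K, (M x).IsSymm) : MemLp (fun x => H (M x) x) q (μ.restrict K) := by
  have hfin : IsFiniteMeasure (μ.restrict K) := isFiniteMeasure_restrict.2 hK.measure_ne_top
  obtain ⟨C, hC⟩ := hK.exists_bound_of_continuousOn hM
  exact memLp_comp hH hδ hHm hH0 (hM.aestronglyMeasurable hK.measurableSet)
    (ae_restrict_of_forall_mem hK.measurableSet hsymm)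
    (ae_restrict_of_forall_mem hK.measurableSet hC)

end Ellipticity

section Hessian

variable {d : ℕ} {u v : E d → ℝ} {x : E d}

theorem differentiableAt_fderiv_of_contDiffAt_two (hu : ContDiffAt ℝ 2 u x) :
    DifferentiableAt ℝ (fderiv ℝ u) x :=
  (hu.fderiv_right (m := 1) (by norm_num)).differentiableAt one_ne_zero

theorem hess_apply (hu : DifferentiableAt ℝ (fderiv ℝ u) x) (i j : Fin d) :
    hess u x i j =
      fderiv ℝ (fderiv ℝ u) x (EuclideanSpace.single i 1) (EuclideanSpace.single j 1) := by
  simp [hess, fderiv_clm_apply hu (differentiableAt_const _)]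

theorem isSymm_hess (hu : ContDiffAt ℝ 2 u x) : (hess u x).IsSymm := by
  ext i j
  simp only [Matrix.transpose_apply, hess_apply (differentiableAt_fderiv_of_contDiffAt_two hu)]
  exact hu.isSymmSndFDerivAt (by simp) _ _

theorem hess_add (hu : ContDiffAt ℝ 2 u x) (hv : ContDiffAt ℝ 2 v x) :
    hess (fun y => u y + v y) x = hess u x + hess v x := by
  have hu' := differentiableAt_fderiv_of_contDiffAt_two hu
  have hv' := differentiableAt_fderiv_of_contDiffAt_two hv
  have hfderiv : fderiv ℝ (fun y => u y + v y) =ᶠ[nhds x] fun y => fderiv ℝ u y + fderiv ℝ v y := by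
    filter_upwards [hu.eventually (by simp), hv.eventually (by simp)] with y huy hvy
    exact fderiv_fun_add (huy.differentiableAt two_ne_zero) (hvy.differentiableAt two_ne_zero)
  ext i j
  rw [hess_apply (hfderiv.differentiableAt_iff.2 (hu'.fun_add hv')), hfderiv.fderiv_eq,
    fderiv_fun_add hu' hv', Matrix.add_apply, hess_apply hu', hess_apply hv']
  rfl

theorem continuousOn_hess {Ω : Set (E d)} (hΩ : IsOpen Ω) (hu : ContDiffOn ℝ 2 u Ω) :
    ContinuousOn (hess u) Ω := by
  have hu'' : ContinuousOn (fderiv ℝ (fderiv ℝ u)) Ω :=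
    (hu.fderiv_of_isOpen (m := 1) hΩ (by norm_num)).continuousOn_fderiv_of_isOpen hΩ le_rfl
  refine continuousOn_pi.2 fun i => continuousOn_pi.2 fun j => ?_
  exact ((hu''.clm_apply continuousOn_const).clm_apply continuousOn_const).congr fun x hx =>
    hess_apply (differentiableAt_fderiv_of_contDiffAt_two (hu.contDiffAt (hΩ.mem_nhds hx))) i j

/-- The concave paraboloid `c (r² - |x - x₀|²)`, which vanishes on `∂B_r(x₀)` and has height
`c r²` at `x₀`; added to `u`, it produces the test functions of the comparison estimate. -/
def paraboloid (c r : ℝ) (x₀ x : E d) : ℝ :=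
  c * (r ^ 2 - ‖x - x₀‖ ^ 2)

theorem contDiff_paraboloid (c r : ℝ) (x₀ : E d) : ContDiff ℝ 2 (paraboloid c r x₀) :=
  contDiff_const.mul (contDiff_const.sub ((contDiff_id.sub contDiff_const).norm_sq ℝ))

theorem paraboloid_center (c r : ℝ) (x₀ : E d) : paraboloid c r x₀ x₀ = c * r ^ 2 := by
  simp [paraboloid]

theorem paraboloid_eq_zero_of_mem_sphere {c r : ℝ} {x₀ : E d} (hx : x ∈ sphere x₀ r) :
    paraboloid c r x₀ x = 0 := by
  simp [paraboloid, mem_sphere_iff_norm.1 hx]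

theorem hasFDerivAt_paraboloid (c r : ℝ) (x₀ x : E d) :
    HasFDerivAt (paraboloid c r x₀) (-(2 * c) • innerSL ℝ (x - x₀)) x := by
  convert! (((hasFDerivAt_id (𝕜 := ℝ) x).sub_const x₀).norm_sq.const_sub (r ^ 2)).const_mul c
    using 1
  ext y
  simp [two_mul]
  ring

theorem hess_paraboloid (c r : ℝ) (x₀ x : E d) :
    hess (paraboloid c r x₀) x = -(2 * c) • (1 : Matrix (Fin d) (Fin d) ℝ) := by
  have hfderiv : fderiv ℝ (paraboloid c r x₀) = fun y => -(2 * c) • innerSL ℝ (y - x₀) :=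
    funext fun y => (hasFDerivAt_paraboloid c r x₀ y).fderiv
  have hsnd : HasFDerivAt (fderiv ℝ (paraboloid c r x₀))
      (-(2 * c) • (innerSL ℝ : E d →L[ℝ] E d →L[ℝ] ℝ)) x := by
    rw [hfderiv]
    have hsub : HasFDerivAt (fun y : E d => y - x₀) (.id ℝ (E d)) x :=
      (hasFDerivAt_id x).sub_const x₀
    exact ((innerSL ℝ : E d →L[ℝ] E d →L[ℝ] ℝ).hasFDerivAt.comp x hsub).const_smul (-(2 * c))
  ext i j
  rw [hess_apply hsnd.differentiableAt, hsnd.fderiv]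
  rw [smul_apply, smul_apply, innerSL_apply_apply, EuclideanSpace.inner_single_left]
  simp [Matrix.one_apply]

end Hessian

section LebesgueDifferentiation

theorem ae_tendsto_lintegral_closedBall_div {V : Type*} [MetricSpace V]
    [SecondCountableTopology V] [HasBesicovitchCovering V] [MeasurableSpace V] [BorelSpace V]
    (μ : Measure V) [IsLocallyFiniteMeasure μ] (g : V → ℝ≥0∞) :
    ∀ᵐ x ∂μ, (∃ s ∈ nhds x, AEMeasurable g (μ.restrict s) ∧ ∫⁻ y in s, g y ∂μ ≠ ⊤) →
      Tendsto (fun r => (∫⁻ y in closedBall x r, g y ∂μ) / μ (closedBall x r))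
        (nhdsWithin 0 (Ioi 0)) (nhds (g x)) := by
  rw [ae_iff]
  refine measure_null_of_locally_null _ fun x hx => ?_
  obtain ⟨⟨s, hs, hgm, hgs⟩, -⟩ := Classical.not_imp.1 hx
  set U := interior s
  have hgU : AEMeasurable (U.indicator g) μ :=
    (aemeasurable_indicator_iff measurableSet_interior).2 (hgm.mono_set interior_subset)
  have hfin : ∫⁻ y, U.indicator g y ∂μ ≠ ⊤ := by
    rw [lintegral_indicator measurableSet_interior]
    exact ne_top_of_le_ne_top hgs (lintegral_mono_set interior_subset)
  refine ⟨_, inter_mem_nhdsWithin _ (interior_mem_nhds.2 hs), ?_⟩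
  suffices ∀ᵐ z ∂μ, z ∈ U → Tendsto
      (fun r => (∫⁻ y in closedBall z r, g y ∂μ) / μ (closedBall z r))
      (nhdsWithin 0 (Ioi 0)) (nhds (g z)) by
    refine measure_mono_null (fun z hz => ?_) (ae_iff.1 this)
    exact Classical.not_imp.2 ⟨hz.2, (Classical.not_imp.1 hz.1).2⟩
  filter_upwards [(Besicovitch.vitaliFamily μ).ae_tendsto_lintegral_div hgU hfin] with z hz hzU
  have hlim := hz.comp (Besicovitch.tendsto_filterAt μ z)
  rw [indicator_of_mem hzU] at hlim
  refine hlim.congr' ?_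
  filter_upwards [nhdsWithin_le_nhds
    (eventually_closedBall_subset (isOpen_interior.mem_nhds hzU))] with r hr
  simp only [Function.comp_apply]
  rw [setLIntegral_congr_fun measurableSet_closedBall fun y hy => indicator_of_mem (hr hy) g]

theorem memLp_ofReal_iff_lintegral_abs_rpow_lt_top {X : Type*} [MeasurableSpace X]
    {μ : Measure X} {p : ℝ} (hp : 0 < p) {g : X → ℝ} (hg : AEStronglyMeasurable g μ) :
    MemLp g (ENNReal.ofReal p) μ ↔ ∫⁻ x, ENNReal.ofReal (|g x| ^ p) ∂μ < ⊤ := by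
  rw [MemLp, and_iff_right hg, eLpNorm_lt_top_iff_lintegral_rpow_enorm_lt_top
    (ENNReal.ofReal_ne_zero_iff.2 hp) ENNReal.ofReal_ne_top]
  simp only [ENNReal.toReal_ofReal hp.le, Real.enorm_eq_ofReal_abs,
    ENNReal.ofReal_rpow_of_nonneg (abs_nonneg _) hp.le]

variable {d : ℕ} {p : ℝ}

theorem nLp_ball_eq_nLp_closedBall (p : ℝ) (x : E d) {r : ℝ} (hr : r ≠ 0) (g : E d → ℝ) :
    nLp p (ball x r) g = nLp p (closedBall x r) g := by
  have hae : ball x r =ᵐ[volume] closedBall x r := by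
    rw [← ball_union_sphere]
    exact (union_ae_eq_left_of_ae_eq_empty
      (ae_eq_empty.2 (Measure.addHaar_sphere_of_ne_zero volume x hr))).symm
  rw [nLp, nLp, measure_congr hae, setLIntegral_congr hae]

theorem nLp_congr {B : Set (E d)} (hB : MeasurableSet B) {g g' : E d → ℝ} (h : EqOn g g' B) :
    nLp p B g = nLp p B g' := by
  rw [nLp, nLp, setLIntegral_congr_fun hB fun y hy => by rw [h hy]]

theorem ae_tendsto_nLp_ball (hp : 0 < p) (g : E d → ℝ) :
    ∀ᵐ x, (∃ s ∈ nhds x, MemLp g (ENNReal.ofReal p) (volume.restrict s)) →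
      Tendsto (fun r => nLp p (ball x r) g) (nhdsWithin 0 (Ioi 0))
        (nhds (ENNReal.ofReal |g x|)) := by
  filter_upwards [ae_tendsto_lintegral_closedBall_div volume
    fun x => ENNReal.ofReal (|g x| ^ p)] with x hx ⟨s, hs, hg⟩
  have hmeas : AEMeasurable (fun y => ENNReal.ofReal (|g y| ^ p)) (volume.restrict s) :=
    (hg.1.aemeasurable.abs.pow_const p).ennreal_ofReal
  have hlim := (hx ⟨s, hs, hmeas,
    ((memLp_ofReal_iff_lintegral_abs_rpow_lt_top hp hg.1).1 hg).ne⟩).ennrpow_const (1 / p)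
  rw [← ENNReal.ofReal_rpow_of_nonneg (abs_nonneg _) hp.le, ← ENNReal.rpow_mul,
    mul_one_div_cancel hp.ne', ENNReal.rpow_one] at hlim
  refine hlim.congr' ?_
  filter_upwards [self_mem_nhdsWithin] with r hr
  rw [nLp_ball_eq_nLp_closedBall p x (ne_of_gt hr), nLp, ENNReal.div_eq_inv_mul]

end LebesgueDifferentiation

section Comparison

variable {d : ℕ} {δ p N : ℝ} {Ω : Set (E d)} {H : Matrix (Fin d) (Fin d) ℝ → E d → ℝ}
  {f u : E d → ℝ}

/-- The comparison estimate
`u ≥ φ - sup_{∂B_r} (u - φ)₋ - N r² (⨍_{B_r} ((f - H(D²φ, ·))₊)^p)^{1/p}` in every ball `B_r` with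
closure in `Ω`, for every test function `φ` of class `C²`. It is written in `ℝ≥0∞` as an upper
bound for `(φ - u)₊`, so that an infinite `L_p` norm makes it void. -/
def ComparisonEstimate (p N : ℝ) (Ω : Set (E d)) (H : Matrix (Fin d) (Fin d) ℝ → E d → ℝ)
    (f u : E d → ℝ) : Prop :=
  ∀ (x₀ : E d) (r : ℝ), 0 < r → closedBall x₀ r ⊆ Ω →
    ∀ φ : E d → ℝ, ContDiffOn ℝ 2 φ (closedBall x₀ r) → ∀ x ∈ ball x₀ r,
      ENNReal.ofReal (φ x - u x) ≤
        (⨆ y ∈ sphere x₀ r, ENNReal.ofReal (φ y - u y)) +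
          ENNReal.ofReal (N * r ^ 2) *
            nLp p (ball x₀ r) (fun y => max (f y - H (hess φ y) y) 0)

theorem ComparisonEstimate.ofReal_le_mul_nLp (hcomp : ComparisonEstimate p N Ω H f u)
    (hΩ : IsOpen Ω) (hu : ContDiffOn ℝ 2 u Ω) {ε : ℝ} (hε : 0 ≤ ε) {x : E d} {r : ℝ} (hr : 0 < r)
    (hball : closedBall x r ⊆ Ω) :
    ENNReal.ofReal ε ≤ ENNReal.ofReal N *
      nLp p (ball x r) (fun y => max (f y - H (hess u y - (2 * ε) • 1) y) 0) := by
  set φ : E d → ℝ := fun y => u y + paraboloid ε r x y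
  have hφ : ContDiffOn ℝ 2 φ (closedBall x r) :=
    (hu.mono hball).add (contDiff_paraboloid ε r x).contDiffOn
  have hcenter : φ x - u x = ε * r ^ 2 := by
    simp only [φ, add_sub_cancel_left, paraboloid_center]
  have hsphere : ⨆ y ∈ sphere x r, ENNReal.ofReal (φ y - u y) = 0 := by
    simp only [ENNReal.iSup_eq_zero]
    intro y hy
    simp only [φ, add_sub_cancel_left, paraboloid_eq_zero_of_mem_sphere hy, ENNReal.ofReal_zero]
  have hhess : EqOn (fun y => max (f y - H (hess φ y) y) 0)
      (fun y => max (f y - H (hess u y - (2 * ε) • 1) y) 0) (ball x r) := fun y hy => by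
    have huy := hu.contDiffAt (hΩ.mem_nhds (hball (ball_subset_closedBall hy)))
    simp only [φ, hess_add huy (contDiff_paraboloid ε r x).contDiffAt, hess_paraboloid, neg_smul,
      sub_eq_add_neg]
  have hest := hcomp x r hr hball φ hφ x (mem_ball_self hr)
  rw [hcenter, hsphere, zero_add, nLp_congr measurableSet_ball hhess, ENNReal.ofReal_mul hε,
    ENNReal.ofReal_mul' (sq_nonneg r), mul_right_comm] at hest
  exact (ENNReal.mul_le_mul_iff_left (ENNReal.ofReal_ne_zero_iff.2 (by positivity))
    ENNReal.ofReal_ne_top).1 hest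

theorem ComparisonEstimate.ae_hess_sub_le (hcomp : ComparisonEstimate p N Ω H f u)
    (hΩ : IsOpen Ω) (hδ : 0 < δ) (hp : 0 < p) (hH : ∀ x, Elliptic δ fun m => H m x)
    (hHm : ∀ m, Measurable (H m))
    (hH0 : ∀ K, IsCompact K → K ⊆ Ω → MemLp (H 0) (ENNReal.ofReal p) (volume.restrict K))
    (hf : ∀ K, IsCompact K → K ⊆ Ω → MemLp f (ENNReal.ofReal p) (volume.restrict K))
    (hu : ContDiffOn ℝ 2 u Ω) {ε : ℝ} (hε : 0 < ε) :
    ∀ᵐ x, x ∈ Ω → H (hess u x - (2 * ε) • 1) x ≤ f x := by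
  set M : E d → Matrix (Fin d) (Fin d) ℝ := fun y => hess u y - (2 * ε) • 1
  set g : E d → ℝ := fun y => max (f y - H (M y) y) 0
  have hM_cont : ContinuousOn M Ω := (continuousOn_hess hΩ hu).sub continuousOn_const
  have hM_symm : ∀ y ∈ Ω, (M y).IsSymm := fun y hy =>
    (isSymm_hess (hu.contDiffAt (hΩ.mem_nhds hy))).sub (Matrix.isSymm_one.smul _)
  have hg (K : Set (E d)) (hK : IsCompact K) (hKΩ : K ⊆ Ω) :
      MemLp g (ENNReal.ofReal p) (volume.restrict K) :=
    ((hf K hK hKΩ).sub (Elliptic.memLp_comp_of_continuousOn hH hδ hHm hK (hH0 K hK hKΩ)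
      (hM_cont.mono hKΩ) fun y hy => hM_symm y (hKΩ hy))).pos_part
  filter_upwards [ae_tendsto_nLp_ball hp g] with x hx hxΩ
  obtain ⟨K, hK, hxK, hKΩ⟩ := exists_compact_subset hΩ hxΩ
  have hlim : Tendsto (fun r => ENNReal.ofReal N * nLp p (ball x r) g) (nhdsWithin 0 (Ioi 0))
      (nhds (ENNReal.ofReal N * ENNReal.ofReal |g x|)) :=
    ENNReal.Tendsto.const_mul (hx ⟨K, mem_interior_iff_mem_nhds.1 hxK, hg K hK hKΩ⟩)
      (Or.inr ENNReal.ofReal_ne_top)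
  have hbound : ENNReal.ofReal ε ≤ ENNReal.ofReal N * ENNReal.ofReal |g x| := by
    refine ge_of_tendsto hlim ?_
    filter_upwards [self_mem_nhdsWithin, nhdsWithin_le_nhds
      (eventually_closedBall_subset (hΩ.mem_nhds hxΩ))] with r hr hball
    exact hcomp.ofReal_le_mul_nLp hΩ hu hε.le hr hball
  by_contra! hlt
  have hgx : g x = 0 := max_eq_right (sub_nonpos.2 hlt.le)
  simp only [hgx, abs_zero, ENNReal.ofReal_zero, mul_zero, nonpos_iff_eq_zero,
    ENNReal.ofReal_eq_zero] at hbound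
  exact hε.not_ge hbound

theorem stmt_15_general (hΩ : IsOpen Ω) (hδ : 0 < δ) (hp : 0 < p)
    (hH : ∀ x, Elliptic δ fun m => H m x) (hHm : ∀ m, Measurable (H m))
    (hH0 : ∀ K, IsCompact K → K ⊆ Ω → ∫⁻ x in K, ENNReal.ofReal (|H 0 x| ^ p) < ⊤)
    (hfm : AEMeasurable f (volume.restrict Ω))
    (hf : ∀ K, IsCompact K → K ⊆ Ω → ∫⁻ x in K, ENNReal.ofReal (|f x| ^ p) < ⊤)
    (hu : ContDiffOn ℝ 2 u Ω) (hcomp : ∃ N : ℝ, ComparisonEstimate p N Ω H f u) :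
    ∀ᵐ x, x ∈ Ω → H (hess u x) x ≤ f x := by
  obtain ⟨N, hN⟩ := hcomp
  have hH0_memLp (K) (hK : IsCompact K) (hKΩ : K ⊆ Ω) :=
    (memLp_ofReal_iff_lintegral_abs_rpow_lt_top hp (hHm 0).aestronglyMeasurable).2 (hH0 K hK hKΩ)
  have hf_memLp (K) (hK : IsCompact K) (hKΩ : K ⊆ Ω) :=
    (memLp_ofReal_iff_lintegral_abs_rpow_lt_top hp
      (hfm.mono_set hKΩ).aestronglyMeasurable).2 (hf K hK hKΩ)
  obtain ⟨ε, -, hε_pos, hε_lim⟩ := exists_seq_strictAnti_tendsto (0 : ℝ)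
  have hshift : ∀ᵐ x, ∀ n, x ∈ Ω → H (hess u x - (2 * ε n) • 1) x ≤ f x :=
    ae_all_iff.2 fun n => hN.ae_hess_sub_le hΩ hδ hp hH hHm hH0_memLp hf_memLp hu (hε_pos n)
  filter_upwards [hshift] with x hx hxΩ
  have hsymm := isSymm_hess (hu.contDiffAt (hΩ.mem_nhds hxΩ))
  have hM_lim : Tendsto (fun n => hess u x - (2 * ε n) • (1 : Matrix (Fin d) (Fin d) ℝ)) atTop
      (nhds (hess u x)) := by
    simpa using ((hε_lim.const_mul 2).smul_const (1 : Matrix (Fin d) (Fin d) ℝ)).const_sub _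
  have hH_lim : Tendsto (fun n => H (hess u x - (2 * ε n) • 1) x) atTop
      (nhds (H (hess u x) x)) :=
    ((hH x).continuousOn hδ _ hsymm).tendsto.comp (tendsto_nhdsWithin_iff.2
      ⟨hM_lim, .of_forall fun n => hsymm.sub (Matrix.isSymm_one.smul _)⟩)
  exact le_of_tendsto' hH_lim fun n => hx n hxΩ

end Comparison

/-- The 'if' direction of the paper's Lemma 5.3: comparison with smooth test functions
implies `Ĥ[u] ≤ f` almost everywhere. -/
theorem stmt_15 (d : ℕ) (hd : 1 ≤ d) (δ : ℝ) (hδ : δ ∈ Set.Ioc (0 : ℝ) 1)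
    (p : ℝ) (hp : (d : ℝ) / 2 < p) (R : ℝ) (hR : 0 < R)
    (H : Matrix (Fin d) (Fin d) ℝ → E d → ℝ) (f : E d → ℝ) (u : E d → ℝ)
    (hHe : ∀ x, Elliptic δ fun m => H m x)
    (hHm : ∀ m, Measurable fun x => H m x)
    (hH0 : ∀ A : Set (E d), IsCompact A → A ⊆ ball (0 : E d) R →
      (∫⁻ x in A, ENNReal.ofReal (|H 0 x| ^ p)) < ⊤)
    (hfm : Measurable f)
    (hfl : ∀ A : Set (E d), IsCompact A → A ⊆ ball (0 : E d) R →
      (∫⁻ x in A, ENNReal.ofReal (|f x| ^ p)) < ⊤)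
    (hu : ContDiffOn ℝ 2 u (ball (0 : E d) R))
    (hcomp : ∃ N : ℝ, ∀ (x₀ : E d) (r : ℝ), 0 < r →
      closedBall x₀ r ⊆ ball (0 : E d) R →
      ∀ φ : E d → ℝ, ContDiffOn ℝ 2 φ (closedBall x₀ r) →
        ∀ x ∈ ball x₀ r,
          ENNReal.ofReal (φ x - u x) ≤
            (⨆ y ∈ sphere x₀ r, ENNReal.ofReal (φ y - u y)) +
              ENNReal.ofReal (N * r ^ 2) *
                nLp p (ball x₀ r) (fun y => max (f y - H (hess φ y) y) 0)) :
    ∀ᵐ x ∂volume, x ∈ ball (0 : E d) R → H (hess u x) x ≤ f x :=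
  stmt_15_general isOpen_ball hδ.1 ((by positivity : (0 : ℝ) ≤ d / 2).trans_lt hp) hHe hHm hH0
    hfm.aemeasurable hfl hu hcomp
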